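/- Young integration with respect to the twisted increment (L^p version): let T > 0 and γ, κ ∈ (0,1) with γ + κ > 1. Let X : S_T² → B(L^p(ℝ^n)) be a family of bounded operators with ‖X_{ts}φ‖_{L^p} ≤ C_X (t−s)^γ ‖φ‖_{L^p} for all φ and all s ≤ t, satisfying X_{ts} = X_{tu} + S_{t−u} ∘ X_{us} for all 0 ≤ s ≤ u ≤ t ≤ T, and such that (s,t) ↦ X_{ts}φ is continuous for each φ. Let z : [0,T] → L^p(ℝ^n) be κ-Hölder continuous. Then there exists a unique continuous A : S_T² → L^p(ℝ^n) such that (i) A_{ts} = A_{tu} + S_{t−u}(A_{us}) for all s ≤ u ≤ t, and (ii) sup_{s<t} ‖A_{ts} − X_{ts}(z_s)‖_{L^p}/(t−s)^{γ+κ} < ∞. Moreover there is a constant c depending only on γ, κ and T such that sup_{s<t} ‖A_{ts}‖_{L^p}/(t−s)^γ ≤ c C_X (sup_{t} ‖z_t‖_{L^p} + sup_{s<t} ‖z_t − z_s‖_{L^p}/(t−s)^κ), and for every s ≤ t one has A_{ts} = lim Σ_k S_{t−t_{k+1}}( X_{t_{k+1}t_k}(z_{t_k}) ) in L^p(ℝ^n),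 the limit being over partitions s = t_0 < … < t_m = t of [s,t] as the mesh tends to 0. -/

import Mathlib

open MeasureTheory Real
open scoped ENNReal

/-- The heat kernel on ℝ^n: `g_t(ξ) = (2πt)^(-n/2) exp(-|ξ|²/(2t))`. -/
noncomputable def heatKernel (n : ℕ) (t : ℝ) : EuclideanSpace ℝ (Fin n) → ℝ :=
  fun ξ => (2 * π * t) ^ (-(n : ℝ) / 2) * Real.exp (-‖ξ‖ ^ 2 / (2 * t))

/-- Convolution of two real functions on ℝ^n. -/
noncomputable def convol {n : ℕ} (f g : EuclideanSpace ℝ (Fin n) → ℝ) :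
    EuclideanSpace ℝ (Fin n) → ℝ :=
  fun ξ => ∫ η, f η * g (ξ - η)

/-- The Lebesgue space `L^p(ℝ^n)`. -/
abbrev LpR (n : ℕ) (p : ℝ) : Type :=
  Lp ℝ (ENNReal.ofReal p) (volume : Measure (EuclideanSpace ℝ (Fin n)))

/-!
Freeze the endpoint `t`. The germ `Ξ^t_{rv} = S_{t-v} X_{vr} z_r = X_{tr} z_r - X_{tv} z_r` is
almost additive on `[0, t]`: its defect at `r ≤ u ≤ v` is `S_{t-v} X_{vu} (z_r - z_u)`, of order
`(v - r) ^ (γ + κ)` with `γ + κ > 1`. The sewing lemma gives a path `F^t` whose increments differ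
from `Ξ^t` by `O((v - r) ^ (γ + κ))`, and `A_{ts} = F^t_t - F^t_s`. Since `S_{t-u} Ξ^u = Ξ^t` on
`[0, u]`, the path `F^t - S_{t-u} F^u` has superlinearly small increments, hence is constant there,
which is the relation `A_{ts} = A_{tu} + S_{t-u} A_{us}`.

Telescoping this relation along a partition turns `A_{ts}` into the twisted Riemann sum of `A`,
which differs from that of `X z` by `O(mesh ^ (γ + κ - 1))`, uniformly in `s` and `t`. Convergence
of the Riemann sums, continuity of `A` and its uniqueness follow. Only a bound on the norms of the
operators `S_t` enters; for the heat semigroup on `L^p` it is Young's inequality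
`‖S_t‖ ≤ ‖g_t‖₁ = 1`.
-/

open Filter Topology

section HeatSemigroup

theorem rpow_lintegral_le {α : Type*} [MeasurableSpace α] (μ : Measure α) {g : α → ℝ≥0∞}
    (hg : AEMeasurable g μ) {p : ℝ} (hp : 1 ≤ p) :
    (∫⁻ x, g x ∂μ) ^ p ≤ μ Set.univ ^ (p - 1) * ∫⁻ x, g x ^ p ∂μ := by
  have hp0 : 0 < p := one_pos.trans_le hp
  have h := eLpNorm'_le_eLpNorm'_mul_rpow_measure_univ one_pos hp hg.aestronglyMeasurable
  simp only [eLpNorm', enorm_eq_self, ENNReal.rpow_one, div_one] at h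
  calc (∫⁻ x, g x ∂μ) ^ p
      ≤ ((∫⁻ x, g x ^ p ∂μ) ^ (1 / p) * μ Set.univ ^ (1 - 1 / p)) ^ p := by gcongr
    _ = μ Set.univ ^ (p - 1) * ∫⁻ x, g x ^ p ∂μ := by
      rw [ENNReal.mul_rpow_of_nonneg _ _ hp0.le, ← ENNReal.rpow_mul, ← ENNReal.rpow_mul,
        one_div_mul_cancel hp0.ne', ENNReal.rpow_one, sub_mul, one_div_mul_cancel hp0.ne', one_mul,
        mul_comm]

theorem lintegral_rpow_lintegral_sub_le {G : Type*} [AddGroup G] [MeasurableSpace G]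
    [MeasurableSub₂ G] [MeasurableAdd G] (μ ν : Measure G) [SFinite μ] [SFinite ν]
    [ν.IsAddRightInvariant] {g : G → ℝ≥0∞} (hg : Measurable g) {p : ℝ} (hp : 1 ≤ p) :
    ∫⁻ ξ, (∫⁻ η, g (ξ - η) ∂μ) ^ p ∂ν ≤ μ Set.univ ^ p * ∫⁻ ξ, g ξ ^ p ∂ν := by
  have hgp : Measurable fun r : G × G => g (r.1 - r.2) ^ p :=
    (hg.comp (measurable_fst.sub measurable_snd)).pow_const p
  calc ∫⁻ ξ, (∫⁻ η, g (ξ - η) ∂μ) ^ p ∂ν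
      ≤ ∫⁻ ξ, μ Set.univ ^ (p - 1) * ∫⁻ η, g (ξ - η) ^ p ∂μ ∂ν :=
        lintegral_mono fun ξ => rpow_lintegral_le μ (by fun_prop) hp
    _ = μ Set.univ ^ (p - 1) * ∫⁻ η, ∫⁻ ξ, g (ξ - η) ^ p ∂ν ∂μ := by
        rw [lintegral_const_mul _ hgp.lintegral_prod_right',
          lintegral_lintegral_swap hgp.aemeasurable]
    _ = μ Set.univ ^ (p - 1) * (μ Set.univ * ∫⁻ ξ, g ξ ^ p ∂ν) := by
        simp_rw [lintegral_sub_right_eq_self fun ξ => g ξ ^ p, lintegral_const, mul_comm]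
    _ = μ Set.univ ^ p * ∫⁻ ξ, g ξ ^ p ∂ν := by
        rw [← mul_assoc]
        congr 1
        nth_rw 2 [← ENNReal.rpow_one (μ Set.univ)]
        rw [← ENNReal.rpow_add_of_nonneg _ _ (sub_nonneg.2 hp) zero_le_one, sub_add_cancel]

theorem eLpNorm_convol_le {n : ℕ} {f φ : EuclideanSpace ℝ (Fin n) → ℝ} (hf : Measurable f)
    (hφ : Measurable φ) {p : ℝ≥0∞} (hp : 1 ≤ p) (hp_top : p ≠ ∞) :
    eLpNorm (convol f φ) p volume ≤ eLpNorm f 1 volume * eLpNorm φ p volume := by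
  have hp0 : p ≠ 0 := (one_pos.trans_le hp).ne'
  have hp_pos : 0 < p.toReal := ENNReal.toReal_pos hp0 hp_top
  set μ : Measure (EuclideanSpace ℝ (Fin n)) := volume.withDensity fun η => ‖f η‖ₑ with hμ
  have hmass : μ Set.univ = eLpNorm f 1 volume := by
    rw [hμ, withDensity_apply _ MeasurableSet.univ, Measure.restrict_univ,
      eLpNorm_one_eq_lintegral_enorm]
  have hconvol : ∀ ξ, ‖convol f φ ξ‖ₑ ≤ ∫⁻ η, ‖φ (ξ - η)‖ₑ ∂μ := fun ξ => by
    refine (enorm_integral_le_lintegral_enorm _).trans_eq ?_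
    rw [hμ, lintegral_withDensity_eq_lintegral_mul _ hf.enorm (by fun_prop)]
    simp only [enorm_mul, Pi.mul_apply]
  rw [eLpNorm_eq_lintegral_rpow_enorm_toReal hp0 hp_top,
    eLpNorm_eq_lintegral_rpow_enorm_toReal hp0 hp_top]
  calc (∫⁻ ξ, ‖convol f φ ξ‖ₑ ^ p.toReal) ^ (1 / p.toReal)
      ≤ (∫⁻ ξ, (∫⁻ η, ‖φ (ξ - η)‖ₑ ∂μ) ^ p.toReal) ^ (1 / p.toReal) := by
        gcongr with ξ
        exact hconvol ξ
    _ ≤ (μ Set.univ ^ p.toReal * ∫⁻ ξ, ‖φ ξ‖ₑ ^ p.toReal) ^ (1 / p.toReal) := by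
        gcongr
        exact lintegral_rpow_lintegral_sub_le μ volume hφ.enorm
          (by simpa using ENNReal.toReal_mono hp_top hp)
    _ = eLpNorm f 1 volume * (∫⁻ ξ, ‖φ ξ‖ₑ ^ p.toReal) ^ (1 / p.toReal) := by
        rw [ENNReal.mul_rpow_of_nonneg _ _ (by positivity), ← ENNReal.rpow_mul,
          mul_one_div_cancel hp_pos.ne', ENNReal.rpow_one, hmass]

theorem measurable_heatKernel (n : ℕ) (t : ℝ) : Measurable (heatKernel n t) := by
  unfold heatKernel
  fun_prop

theorem heatKernel_nonneg (n : ℕ) {t : ℝ} (ht : 0 ≤ t) (ξ : EuclideanSpace ℝ (Fin n)) :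
    0 ≤ heatKernel n t ξ := by
  unfold heatKernel
  positivity

theorem integral_heatKernel (n : ℕ) {t : ℝ} (ht : 0 < t) : ∫ ξ, heatKernel n t ξ = 1 := by
  have hgauss : ∀ ξ, heatKernel n t ξ
      = (2 * π * t) ^ (-(n : ℝ) / 2) * rexp (-(2 * t)⁻¹ * ‖ξ‖ ^ 2) := fun ξ => by
    rw [heatKernel]
    congr 2
    field_simp
  simp_rw [hgauss]
  rw [integral_const_mul, GaussianFourier.integral_rexp_neg_mul_sq_norm (by positivity),
    finrank_euclideanSpace, Fintype.card_fin, div_inv_eq_mul, mul_left_comm, ← mul_assoc,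
    ← Real.rpow_add (by positivity), neg_div, neg_add_cancel, Real.rpow_zero]

theorem eLpNorm_one_heatKernel (n : ℕ) {t : ℝ} (ht : 0 < t) :
    eLpNorm (heatKernel n t) 1 volume = 1 := by
  have hint : Integrable (heatKernel n t) :=
    not_imp_comm.1 integral_undef (by simp [integral_heatKernel n ht])
  have hnorm : ∀ ξ, ‖heatKernel n t ξ‖ = heatKernel n t ξ := fun ξ =>
    Real.norm_of_nonneg (heatKernel_nonneg n ht.le ξ)
  rw [eLpNorm_one_eq_lintegral_enorm, ← ofReal_integral_norm_eq_lintegral_enorm hint]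
  simp_rw [hnorm, integral_heatKernel n ht, ENNReal.ofReal_one]

theorem norm_heatSemigroup_le_one {n : ℕ} {p : ℝ≥0∞} [Fact (1 ≤ p)] (hp_top : p ≠ ∞)
    {S : ℝ → Lp ℝ p (volume : Measure (EuclideanSpace ℝ (Fin n))) →L[ℝ]
      Lp ℝ p (volume : Measure (EuclideanSpace ℝ (Fin n)))}
    (hS0 : S 0 = ContinuousLinearMap.id ℝ _)
    (hS : ∀ t, 0 < t → ∀ φ, ⇑(S t φ) =ᵐ[volume] convol (heatKernel n t) ⇑φ) {t : ℝ}
    (ht : 0 ≤ t) : ‖S t‖ ≤ 1 := by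
  rcases ht.eq_or_lt with rfl | ht
  · exact hS0 ▸ ContinuousLinearMap.norm_id_le
  refine ContinuousLinearMap.opNorm_le_bound _ zero_le_one fun φ => ?_
  rw [one_mul, Lp.norm_def, Lp.norm_def, eLpNorm_congr_ae (hS t ht φ)]
  refine ENNReal.toReal_mono (Lp.eLpNorm_ne_top φ) ?_
  simpa only [eLpNorm_one_heatKernel n ht, one_mul] using
    eLpNorm_convol_le (measurable_heatKernel n t) (Lp.stronglyMeasurable φ).measurable Fact.out
      hp_top

theorem nontrivial_Lp_of_measure_ne_zero {α E : Type*} [MeasurableSpace α] {μ : Measure α}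
    [NormedAddCommGroup E] [Nontrivial E] {p : ℝ≥0∞} (hp : p ≠ 0) {s : Set α}
    (hs : MeasurableSet s) (hμs : μ s ≠ 0) (hμs' : μ s ≠ ∞) : Nontrivial (Lp E p μ) := by
  obtain ⟨x, hx⟩ := exists_ne (0 : E)
  refine ⟨indicatorConstLp p hs hμs' x, 0, fun h => ?_⟩
  have hnorm := congrArg norm h
  rw [Lp.norm_zero, norm_indicatorConstLp' hp hμs] at hnorm
  have hμ_pos : 0 < μ.real s := ENNReal.toReal_pos hμs hμs'
  exact (mul_pos (norm_pos_iff.2 hx) (Real.rpow_pos_of_pos hμ_pos _)).ne' hnorm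

theorem opNorm_le_of_nontrivial {E F : Type*} [NormedAddCommGroup E] [NormedSpace ℝ E]
    [Nontrivial E] [NormedAddCommGroup F] [NormedSpace ℝ F] {f : E →L[ℝ] F} {c : ℝ}
    (hf : ∀ φ, ‖f φ‖ ≤ c * ‖φ‖) : ‖f‖ ≤ c := by
  obtain ⟨φ, hφ⟩ := exists_ne (0 : E)
  exact f.opNorm_le_bound (nonneg_of_mul_nonneg_left ((norm_nonneg _).trans (hf φ))
    (norm_pos_iff.2 hφ)) hf

end HeatSemigroup

section Partitions

theorem sum_rpow_sub_le {σ : ℕ → ℝ} {m : ℕ} {δ θ : ℝ} (hθ : 1 ≤ θ)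
    (hσ : ∀ k < m, σ k ≤ σ (k + 1)) (hδ : ∀ k < m, σ (k + 1) - σ k ≤ δ) :
    ∑ k ∈ Finset.range m, (σ (k + 1) - σ k) ^ θ ≤ δ ^ (θ - 1) * (σ m - σ 0) := by
  rw [← Finset.sum_range_sub, Finset.mul_sum]
  refine Finset.sum_le_sum fun k hk => ?_
  have hk := Finset.mem_range.1 hk
  have hlen : 0 ≤ σ (k + 1) - σ k := sub_nonneg.2 (hσ k hk)
  calc (σ (k + 1) - σ k) ^ θ = (σ (k + 1) - σ k) ^ (θ - 1) * (σ (k + 1) - σ k) := by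
        rw [← Real.rpow_add_one' hlen (by linarith), sub_add_cancel]
    _ ≤ δ ^ (θ - 1) * (σ (k + 1) - σ k) :=
        mul_le_mul_of_nonneg_right (Real.rpow_le_rpow hlen (hδ k hk) (sub_nonneg.2 hθ)) hlen

theorem monotoneOn_Iic_of_le_succ {α : Type*} [Preorder α] {σ : ℕ → α} {m : ℕ}
    (hσ : ∀ k < m, σ k ≤ σ (k + 1)) : MonotoneOn σ (Set.Iic m) :=
  monotoneOn_of_le_succ Set.ordConnected_Iic fun k _ _ hk => hσ k hk

theorem exists_apply_le_and_le_apply_succ {α : Type*} [LinearOrder α] {f : ℕ → α} {c : α}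
    {i j : ℕ} (hij : i < j) (hi : f i ≤ c) (hj : c ≤ f j) :
    ∃ k, i ≤ k ∧ k < j ∧ f k ≤ c ∧ c ≤ f (k + 1) := by
  induction j, hij using Nat.le_induction with
  | base => exact ⟨i, le_rfl, i.lt_succ_self, hi, hj⟩
  | succ j hij ih =>
    rcases le_total (f j) c with h | h
    · exact ⟨j, (Nat.le_succ i).trans hij, j.lt_succ_self, h, hj⟩
    · obtain ⟨k, hik, hkj, hk⟩ := ih h
      exact ⟨k, hik, hkj.trans j.lt_succ_self, hk⟩

theorem sum_range_two_mul {M : Type*} [AddCommMonoid M] (f : ℕ → M) (n : ℕ) :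
    ∑ k ∈ Finset.range (2 * n), f k = ∑ k ∈ Finset.range n, (f (2 * k) + f (2 * k + 1)) := by
  induction n with
  | zero => simp
  | succ n ih => rw [mul_add_one, Finset.sum_range_succ, Finset.sum_range_succ,
      Finset.sum_range_succ, ih, add_assoc]

/-- The points `s + k (t - s) / n`, which for `k ≤ n` cut `[s, t]` into `n` intervals of equal
length. -/
noncomputable def uniformPartition (s t : ℝ) (n k : ℕ) : ℝ :=
  s + k * ((t - s) / n)

variable {s t : ℝ} {n : ℕ}

@[simp]
theorem uniformPartition_zero (s t : ℝ) (n : ℕ) : uniformPartition s t n 0 = s := by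
  simp [uniformPartition]

theorem uniformPartition_self (hn : n ≠ 0) : uniformPartition s t n n = t := by
  simp only [uniformPartition]
  field_simp
  ring

theorem uniformPartition_succ_sub (s t : ℝ) (n k : ℕ) :
    uniformPartition s t n (k + 1) - uniformPartition s t n k = (t - s) / n := by
  simp only [uniformPartition]
  push_cast
  ring

theorem uniformPartition_two_mul (s t : ℝ) (n k : ℕ) :
    uniformPartition s t (2 * n) (2 * k) = uniformPartition s t n k := by
  simp only [uniformPartition]
  push_cast
  field_simp

theorem monotone_uniformPartition (hst : s ≤ t) (n : ℕ) : Monotone (uniformPartition s t n) :=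
  monotone_nat_of_le_succ fun k => by
    rw [← sub_nonneg, uniformPartition_succ_sub]
    exact div_nonneg (sub_nonneg.2 hst) n.cast_nonneg

theorem uniformPartition_mem_Icc (hst : s ≤ t) {k : ℕ} (hn : n ≠ 0) (hk : k ≤ n) :
    uniformPartition s t n k ∈ Set.Icc s t := by
  constructor
  · simpa using monotone_uniformPartition hst n k.zero_le
  · simpa [uniformPartition_self hn] using monotone_uniformPartition hst n hk

end Partitions

section Sewing

/-- The sewing constant `(1 - 2 ^ (1 - θ))⁻¹`, the sum of the geometric series produced by
successive bisection of an interval. -/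
noncomputable def sewingConst (θ : ℝ) : ℝ :=
  (1 - 2 ^ (1 - θ))⁻¹

theorem two_rpow_one_sub_lt_one {θ : ℝ} (hθ : 1 < θ) : (2 : ℝ) ^ (1 - θ) < 1 :=
  Real.rpow_lt_one_of_one_lt_of_neg one_lt_two (sub_neg.2 hθ)

theorem sewingConst_pos {θ : ℝ} (hθ : 1 < θ) : 0 < sewingConst θ :=
  inv_pos.2 (sub_pos.2 (two_rpow_one_sub_lt_one hθ))

theorem two_rpow_mul_sewingConst_add_one {θ : ℝ} (hθ : 1 < θ) :
    (2 : ℝ) ^ (1 - θ) * sewingConst θ + 1 = sewingConst θ := by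
  have : 1 - (2 : ℝ) ^ (1 - θ) ≠ 0 := (sub_pos.2 (two_rpow_one_sub_lt_one hθ)).ne'
  rw [sewingConst]
  field_simp
  ring

theorem half_rpow_add_half_rpow {x : ℝ} (hx : 0 ≤ x) (θ : ℝ) :
    (x / 2) ^ θ + (x / 2) ^ θ = 2 ^ (1 - θ) * x ^ θ := by
  rw [Real.div_rpow hx zero_le_two, Real.rpow_sub zero_lt_two, Real.rpow_one]
  ring

variable {E : Type*} [NormedAddCommGroup E] {Ξ : ℝ → ℝ → E} {C θ a b : ℝ}

/-- `Ξ` is almost additive on the subintervals of `[a, b]`: its defect of additivity on `[s, t]` is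
at most `C (t - s) ^ θ`. -/
def AlmostAdditive (Ξ : ℝ → ℝ → E) (C θ a b : ℝ) : Prop :=
  ∀ s u t, a ≤ s → s ≤ u → u ≤ t → t ≤ b → ‖Ξ s t - Ξ s u - Ξ u t‖ ≤ C * (t - s) ^ θ

namespace AlmostAdditive

theorem apply_self (h : AlmostAdditive Ξ C θ a b) (hθ : θ ≠ 0) {r : ℝ} (hr : r ∈ Set.Icc a b) :
    Ξ r r = 0 := by
  simpa [Real.zero_rpow hθ] using h r r r hr.1 le_rfl le_rfl hr.2

theorem norm_sub_sub_sub_le (h : AlmostAdditive Ξ C θ a b) (hC : 0 ≤ C) (hθ : 0 ≤ θ)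
    {s u v t : ℝ} (has : a ≤ s) (hsu : s ≤ u) (huv : u ≤ v) (hvt : v ≤ t) (htb : t ≤ b) :
    ‖Ξ s t - Ξ s u - Ξ u v - Ξ v t‖ ≤ 2 * C * (t - s) ^ θ := by
  have hut : 0 ≤ t - u := by linarith
  calc ‖Ξ s t - Ξ s u - Ξ u v - Ξ v t‖
      = ‖(Ξ s t - Ξ s u - Ξ u t) + (Ξ u t - Ξ u v - Ξ v t)‖ := by congr 1; abel
    _ ≤ C * (t - s) ^ θ + C * (t - u) ^ θ :=
        norm_add_le_of_le (h s u t has hsu (huv.trans hvt) htb)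
          (h u v t (has.trans hsu) huv hvt htb)
    _ ≤ C * (t - s) ^ θ + C * (t - s) ^ θ := by gcongr
    _ = 2 * C * (t - s) ^ θ := by ring

/- Cut the partition at the cell straddling the midpoint of `[σ i, σ j]`: the parts to the left and
to the right of that cell have at most half the length. -/
theorem norm_sub_sum_Ico_le (h : AlmostAdditive Ξ C θ a b) (hC : 0 ≤ C) (hθ : 1 < θ)
    {σ : ℕ → ℝ} (hσ : Monotone σ) (hab : ∀ k, σ k ∈ Set.Icc a b) {i j : ℕ} (hij : i ≤ j) :
    ‖Ξ (σ i) (σ j) - ∑ k ∈ Finset.Ico i j, Ξ (σ k) (σ (k + 1))‖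
      ≤ 2 * C * sewingConst θ * (σ j - σ i) ^ θ := by
  induction hd : j - i using Nat.strong_induction_on generalizing i j with
  | _ d ih =>
  subst hd
  have hlen : 0 ≤ σ j - σ i := sub_nonneg.2 (hσ hij)
  have hq := sewingConst_pos hθ
  rcases hij.eq_or_lt with rfl | hij
  · simp [h.apply_self (by linarith) (hab i), Real.zero_rpow (by linarith : θ ≠ 0)]
  obtain ⟨k, hik, hkj, hleft, hright⟩ :=
    exists_apply_le_and_le_apply_succ (f := σ) (c := (σ i + σ j) / 2) hij (by linarith)
      (by linarith)
  have hsum : ∑ l ∈ Finset.Ico i j, Ξ (σ l) (σ (l + 1))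
      = ∑ l ∈ Finset.Ico i k, Ξ (σ l) (σ (l + 1))
        + (Ξ (σ k) (σ (k + 1)) + ∑ l ∈ Finset.Ico (k + 1) j, Ξ (σ l) (σ (l + 1))) := by
    rw [← Finset.sum_Ico_consecutive _ hik hkj.le, Finset.sum_eq_sum_Ico_succ_bot hkj]
  have hhalf : ∀ i' j', i' ≤ j' → j' - i' < j - i → σ j' - σ i' ≤ (σ j - σ i) / 2 →
      ‖Ξ (σ i') (σ j') - ∑ l ∈ Finset.Ico i' j', Ξ (σ l) (σ (l + 1))‖
        ≤ 2 * C * sewingConst θ * ((σ j - σ i) / 2) ^ θ := fun i' j' hij' hlt hle => by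
    refine (ih _ hlt hij' rfl).trans ?_
    have : 0 ≤ σ j' - σ i' := sub_nonneg.2 (hσ hij')
    gcongr
  have hcut := h.norm_sub_sub_sub_le hC (by linarith) (hab i).1 (hσ hik) (hσ k.le_succ) (hσ hkj)
    (hab j).2
  calc ‖Ξ (σ i) (σ j) - ∑ l ∈ Finset.Ico i j, Ξ (σ l) (σ (l + 1))‖
      = ‖(Ξ (σ i) (σ j) - Ξ (σ i) (σ k) - Ξ (σ k) (σ (k + 1)) - Ξ (σ (k + 1)) (σ j))
          + (Ξ (σ i) (σ k) - ∑ l ∈ Finset.Ico i k, Ξ (σ l) (σ (l + 1)))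
          + (Ξ (σ (k + 1)) (σ j) - ∑ l ∈ Finset.Ico (k + 1) j, Ξ (σ l) (σ (l + 1)))‖ := by
        rw [hsum]; congr 1; abel
    _ ≤ 2 * C * (σ j - σ i) ^ θ + 2 * C * sewingConst θ * ((σ j - σ i) / 2) ^ θ
          + 2 * C * sewingConst θ * ((σ j - σ i) / 2) ^ θ :=
        norm_add₃_le.trans <| add_le_add (add_le_add hcut
          (hhalf i k hik (by lia) (by linarith))) (hhalf (k + 1) j hkj (by lia) (by linarith))
    _ = 2 * C * (2 ^ (1 - θ) * sewingConst θ + 1) * (σ j - σ i) ^ θ := by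
        linear_combination 2 * C * sewingConst θ * half_rpow_add_half_rpow hlen θ
    _ = 2 * C * sewingConst θ * (σ j - σ i) ^ θ := by rw [two_rpow_mul_sewingConst_add_one hθ]

theorem norm_sum_sub_sum_two_mul_le (h : AlmostAdditive Ξ C θ a b) (hC : 0 ≤ C) (hθ : 1 ≤ θ)
    {σ : ℕ → ℝ} (hσ : Monotone σ) (hab : ∀ k, σ k ∈ Set.Icc a b) {δ : ℝ}
    (hδ : ∀ k, σ (2 * (k + 1)) - σ (2 * k) ≤ δ) (m : ℕ) :
    ‖∑ k ∈ Finset.range m, Ξ (σ (2 * k)) (σ (2 * (k + 1)))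
        - ∑ k ∈ Finset.range (2 * m), Ξ (σ k) (σ (k + 1))‖
      ≤ C * (δ ^ (θ - 1) * (b - a)) := by
  have hδ0 : 0 ≤ δ := (sub_nonneg.2 (hσ (by omega))).trans (hδ 0)
  rw [sum_range_two_mul, ← Finset.sum_sub_distrib]
  simp_rw [← sub_sub]
  calc _ ≤ ∑ k ∈ Finset.range m, C * (σ (2 * (k + 1)) - σ (2 * k)) ^ θ :=
        norm_sum_le_of_le _ fun k _ =>
          h _ _ _ (hab _).1 (hσ (by omega)) (hσ (by omega)) (hab _).2
    _ ≤ C * (δ ^ (θ - 1) * (σ (2 * m) - σ (2 * 0))) := by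
        rw [← Finset.mul_sum]
        gcongr
        exact sum_rpow_sub_le (σ := fun k => σ (2 * k)) hθ (fun k _ => hσ (by omega))
          fun k _ => hδ k
    _ ≤ C * (δ ^ (θ - 1) * (b - a)) := by
        gcongr
        exacts [(hab _).2, (hab _).1]

theorem norm_sub_min_sub_max_le (h : AlmostAdditive Ξ C θ a b) (hC : 0 ≤ C) (hθ : θ ≠ 0)
    {s t u : ℝ} (has : a ≤ s) (hst : s ≤ t) (htb : t ≤ b) (hu : u ∈ Set.Icc a b) :
    ‖Ξ s t - Ξ (min s u) (min t u) - Ξ (max s u) (max t u)‖ ≤ C * (t - s) ^ θ := by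
  have hnonneg : 0 ≤ C * (t - s) ^ θ := by
    have := sub_nonneg.2 hst
    positivity
  rcases le_total u s with hus | hsu
  · simpa [hus, hus.trans hst, h.apply_self hθ hu] using hnonneg
  rcases le_total t u with htu | hut
  · simpa [htu, hsu, h.apply_self hθ hu] using hnonneg
  · simpa [hsu, hut] using h s u t has hsu hut htb

theorem norm_sum_sub_sum_min_sub_sum_max_le (h : AlmostAdditive Ξ C θ a b) (hC : 0 ≤ C)
    (hθ : 1 ≤ θ) {σ : ℕ → ℝ} (hσ : Monotone σ) (hab : ∀ k, σ k ∈ Set.Icc a b) {δ : ℝ}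
    (hδ : ∀ k, σ (k + 1) - σ k ≤ δ) {u : ℝ} (hu : u ∈ Set.Icc a b) (m : ℕ) :
    ‖∑ k ∈ Finset.range m, Ξ (σ k) (σ (k + 1))
        - ∑ k ∈ Finset.range m, Ξ (min (σ k) u) (min (σ (k + 1)) u)
        - ∑ k ∈ Finset.range m, Ξ (max (σ k) u) (max (σ (k + 1)) u)‖
      ≤ C * (δ ^ (θ - 1) * (b - a)) := by
  have hδ0 : 0 ≤ δ := (sub_nonneg.2 (hσ (Nat.le_succ 0))).trans (hδ 0)
  simp_rw [← Finset.sum_sub_distrib]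
  calc _ ≤ ∑ k ∈ Finset.range m, C * (σ (k + 1) - σ k) ^ θ :=
        norm_sum_le_of_le _ fun k _ => h.norm_sub_min_sub_max_le hC (by linarith) (hab k).1
          (hσ k.le_succ) (hab (k + 1)).2 hu
    _ ≤ C * (δ ^ (θ - 1) * (σ m - σ 0)) := by
        rw [← Finset.mul_sum]
        gcongr
        exact sum_rpow_sub_le hθ (fun k _ => hσ k.le_succ) fun k _ => hδ k
    _ ≤ C * (δ ^ (θ - 1) * (b - a)) := by
        gcongr
        exacts [(hab m).2, (hab 0).1]

end AlmostAdditive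

/-- The Riemann sum of `Ξ` over `[a, t]` along the dyadic points of level `n` of `[a, b]`, cut off
at `t`. The cut-off keeps the sums over `range (2 ^ n)` for all `t`: cells beyond `t` collapse to
`[t, t]`. -/
noncomputable def dyadicSum (Ξ : ℝ → ℝ → E) (a b : ℝ) (n : ℕ) (t : ℝ) : E :=
  ∑ k ∈ Finset.range (2 ^ n), Ξ (min (uniformPartition a b (2 ^ n) k) t)
    (min (uniformPartition a b (2 ^ n) (k + 1)) t)

section Cutoff

variable {t : ℝ}

theorem monotone_min_uniformPartition (hab : a ≤ b) (n : ℕ) (t : ℝ) :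
    Monotone fun k => min (uniformPartition a b n k) t :=
  (monotone_uniformPartition hab n).min monotone_const

theorem min_uniformPartition_mem_Icc (ht : t ∈ Set.Icc a b) (n k : ℕ) :
    min (uniformPartition a b n k) t ∈ Set.Icc a b := by
  have := monotone_uniformPartition (ht.1.trans ht.2) n k.zero_le
  rw [uniformPartition_zero] at this
  exact ⟨le_min this ht.1, min_le_of_right_le ht.2⟩

theorem min_uniformPartition_succ_sub_le (hab : a ≤ b) (n k : ℕ) (t : ℝ) :
    min (uniformPartition a b n (k + 1)) t - min (uniformPartition a b n k) t ≤ (b - a) / n := by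
  have hmono := monotone_uniformPartition hab n k.le_succ
  have hstep := uniformPartition_succ_sub a b n k
  rcases le_total (uniformPartition a b n k) t with h | h
  · rw [min_eq_left h]
    linarith [min_le_left (uniformPartition a b n (k + 1)) t]
  · rw [min_eq_right h, min_eq_right (h.trans hmono)]
    linarith

end Cutoff

theorem div_two_pow_rpow_mul {x : ℝ} (hx : 0 ≤ x) (hθ : θ ≠ 0) (n : ℕ) :
    (x / (2 ^ n : ℕ)) ^ (θ - 1) * x = x ^ θ * (2 ^ (1 - θ)) ^ n := by
  rw [Real.div_rpow hx (by positivity), div_mul_eq_mul_div, ← Real.rpow_add_one' hx (by simpa),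
    sub_add_cancel, div_eq_mul_inv, ← Real.rpow_neg (by positivity), neg_sub, Nat.cast_pow,
    Nat.cast_ofNat, ← Real.rpow_natCast, ← Real.rpow_natCast, ← Real.rpow_mul zero_le_two,
    ← Real.rpow_mul zero_le_two, mul_comm (n : ℝ)]

namespace AlmostAdditive

theorem norm_dyadicSum_sub_succ_le (h : AlmostAdditive Ξ C θ a b) (hC : 0 ≤ C) (hθ : 1 < θ) {t : ℝ}
    (ht : t ∈ Set.Icc a b) (n : ℕ) :
    ‖dyadicSum Ξ a b n t - dyadicSum Ξ a b (n + 1) t‖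
      ≤ C * (b - a) ^ θ * (2 ^ (1 - θ)) ^ n := by
  have hab := ht.1.trans ht.2
  have key := h.norm_sum_sub_sum_two_mul_le hC hθ.le
    (monotone_min_uniformPartition hab (2 * 2 ^ n) t)
    (min_uniformPartition_mem_Icc ht (2 * 2 ^ n))
    (δ := (b - a) / (2 ^ n : ℕ)) (fun k => ?_) (2 ^ n)
  · rw [div_two_pow_rpow_mul (sub_nonneg.2 hab) (by linarith), ← mul_assoc] at key
    simpa only [dyadicSum, pow_succ', uniformPartition_two_mul] using key
  · simp only [uniformPartition_two_mul]
    exact min_uniformPartition_succ_sub_le hab _ k t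

/- Splitting each cell of the grid at `s` costs at most the total defect of the cells, which is
small; the pieces above `s` form a partition of `[s, t]`, to which `norm_sub_sum_Ico_le` applies. -/
theorem norm_dyadicSum_sub_dyadicSum_sub_le (h : AlmostAdditive Ξ C θ a b) (hC : 0 ≤ C)
    (hθ : 1 < θ) {s t : ℝ} (has : a ≤ s) (hst : s ≤ t) (htb : t ≤ b) (n : ℕ) :
    ‖dyadicSum Ξ a b n t - dyadicSum Ξ a b n s - Ξ s t‖
      ≤ C * (b - a) ^ θ * (2 ^ (1 - θ)) ^ n + 2 * C * sewingConst θ * (t - s) ^ θ := by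
  have hab : a ≤ b := has.trans (hst.trans htb)
  have hs : s ∈ Set.Icc a b := ⟨has, hst.trans htb⟩
  have ht : t ∈ Set.Icc a b := ⟨has.trans hst, htb⟩
  set σ : ℕ → ℝ := fun k => min (uniformPartition a b (2 ^ n) k) t with hσ_def
  have hσ : Monotone σ := monotone_min_uniformPartition hab _ t
  have hσ_mem : ∀ k, σ k ∈ Set.Icc a b := min_uniformPartition_mem_Icc ht _
  have hmin : ∀ k, min (σ k) s = min (uniformPartition a b (2 ^ n) k) s := fun k => by
    simp only [hσ_def, min_assoc, min_eq_right hst]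
  have hsplit := h.norm_sum_sub_sum_min_sub_sum_max_le hC hθ.le hσ hσ_mem
    (fun k => min_uniformPartition_succ_sub_le hab _ k t) hs (2 ^ n)
  have hyoung := h.norm_sub_sum_Ico_le hC hθ (σ := fun k => max (σ k) s) (hσ.max monotone_const)
    (fun k => ⟨le_max_of_le_right has, max_le (hσ_mem k).2 hs.2⟩) (Nat.zero_le (2 ^ n))
  have hstart : max (σ 0) s = s := by simp [hσ_def, has]
  have hend : max (σ (2 ^ n)) s = t := by
    simp only [hσ_def, uniformPartition_self (pow_ne_zero n two_ne_zero), min_eq_right htb,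
      max_eq_left hst]
  rw [div_two_pow_rpow_mul (sub_nonneg.2 hab) (by linarith), ← mul_assoc] at hsplit
  simp only [hmin] at hsplit
  simp only [hstart, hend, Nat.Ico_zero_eq_range] at hyoung
  rw [norm_sub_rev] at hyoung
  refine (norm_add_le_of_le hsplit hyoung).trans_eq' (congrArg norm ?_)
  simp only [dyadicSum, hσ_def]
  abel

theorem exists_norm_sub_sub_le [CompleteSpace E] (h : AlmostAdditive Ξ C θ a b) (hC : 0 ≤ C)
    (hθ : 1 < θ) :
    ∃ F : ℝ → E, ∀ s t, a ≤ s → s ≤ t → t ≤ b →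
      ‖F t - F s - Ξ s t‖ ≤ 2 * C * sewingConst θ * (t - s) ^ θ := by
  have hlim : ∀ t ∈ Set.Icc a b, ∃ x, Tendsto (fun n => dyadicSum Ξ a b n t) atTop (𝓝 x) :=
    fun t ht => cauchySeq_tendsto_of_complete <|
      cauchySeq_of_le_geometric _ _ (two_rpow_one_sub_lt_one hθ) fun n => by
        rw [dist_eq_norm]
        exact h.norm_dyadicSum_sub_succ_le hC hθ ht n
  choose! F hF using hlim
  refine ⟨F, fun s t has hst htb => ?_⟩
  have hgeom : Tendsto (fun n : ℕ => C * (b - a) ^ θ * ((2 : ℝ) ^ (1 - θ)) ^ n) atTop (𝓝 0) := by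
    simpa using (tendsto_pow_atTop_nhds_zero_of_lt_one (by positivity)
      (two_rpow_one_sub_lt_one hθ)).const_mul (C * (b - a) ^ θ)
  have hleft := (((hF t ⟨has.trans hst, htb⟩).sub (hF s ⟨has, hst.trans htb⟩)).sub_const
    (Ξ s t)).norm
  have hright := hgeom.add_const (2 * C * sewingConst θ * (t - s) ^ θ)
  rw [zero_add] at hright
  exact le_of_tendsto_of_tendsto' hleft hright
    (h.norm_dyadicSum_sub_dyadicSum_sub_le hC hθ has hst htb)

end AlmostAdditive

end Sewing

section Twisted

variable {E : Type*} [NormedAddCommGroup E]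

theorem nonneg_of_norm_le_mul_rpow {x : E} {C r θ : ℝ} (hr : 0 < r) (h : ‖x‖ ≤ C * r ^ θ) :
    0 ≤ C :=
  nonneg_of_mul_nonneg_left ((norm_nonneg x).trans h) (Real.rpow_pos_of_pos hr θ)

theorem continuousOn_Icc_of_norm_sub_le_rpow {f : ℝ → E} {C κ a b : ℝ} (hC : 0 ≤ C) (hκ : 0 < κ)
    (hf : ∀ s t, a ≤ s → s ≤ t → t ≤ b → ‖f t - f s‖ ≤ C * (t - s) ^ κ) :
    ContinuousOn f (Set.Icc a b) := by
  have hdist : ∀ s ∈ Set.Icc a b, ∀ t ∈ Set.Icc a b, dist (f s) (f t) ≤ C * dist s t ^ κ := by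
    intro s hs t ht
    rw [dist_eq_norm, Real.dist_eq]
    rcases le_total s t with hst | hts
    · rw [norm_sub_rev, abs_sub_comm, abs_of_nonneg (sub_nonneg.2 hst)]
      exact hf s t hs.1 hst ht.2
    · rw [abs_of_nonneg (sub_nonneg.2 hts)]
      exact hf t s ht.1 hts hs.2
  have hholder : HolderOnWith C.toNNReal κ.toNNReal f (Set.Icc a b) := fun s hs t ht => by
    rw [edist_dist, edist_dist, Real.coe_toNNReal κ hκ.le,
      ENNReal.ofReal_rpow_of_nonneg dist_nonneg hκ.le, ← ENNReal.ofReal_coe_nnreal,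
      Real.coe_toNNReal C hC, ← ENNReal.ofReal_mul hC]
    exact ENNReal.ofReal_le_ofReal (hdist s hs t ht)
  exact hholder.continuousOn (Real.toNNReal_pos.2 hκ)

/-- The simplex `S_T²` of the pairs `0 ≤ s ≤ t ≤ T`, stored as `(t, s)` to match the order of the
indices in `A_{ts}`. -/
def timeSimplex (T : ℝ) : Set (ℝ × ℝ) :=
  {r | 0 ≤ r.2 ∧ r.2 ≤ r.1 ∧ r.1 ≤ T}

variable [NormedSpace ℝ E] {S : ℝ → E →L[ℝ] E} {T M θ K : ℝ} {A A' Ξ : ℝ → ℝ → E}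

/-- Additivity up to transport by `S`, that is `δ̂A = 0` on the simplex `S_T²`. For `S = id` these
are the increments of a path. -/
def IsTwistedAdditive (S : ℝ → E →L[ℝ] E) (T : ℝ) (A : ℝ → ℝ → E) : Prop :=
  ∀ s u t, 0 ≤ s → s ≤ u → u ≤ t → t ≤ T → A t s = A t u + S (t - u) (A u s)

/-- The twisted Riemann sum `∑ S_{t - t_{k+1}} Ξ_{t_{k+1} t_k}` over the partition
`σ 0 ≤ … ≤ σ m = t`. -/
noncomputable def twistedSum (S : ℝ → E →L[ℝ] E) (Ξ : ℝ → ℝ → E) (σ : ℕ → ℝ) (m : ℕ) : E :=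
  ∑ k ∈ Finset.range m, S (σ m - σ (k + 1)) (Ξ (σ (k + 1)) (σ k))

namespace IsTwistedAdditive

theorem apply_self (hA : IsTwistedAdditive S T A) (hS0 : S 0 = ContinuousLinearMap.id ℝ E)
    {t : ℝ} (ht : t ∈ Set.Icc 0 T) : A t t = 0 := by
  simpa [hS0] using hA t t t ht.1 le_rfl le_rfl ht.2

theorem eq_twistedSum (hA : IsTwistedAdditive S T A) (hS0 : S 0 = ContinuousLinearMap.id ℝ E)
    {σ : ℕ → ℝ} {m : ℕ} (hσ : MonotoneOn σ (Set.Iic m)) (h0 : 0 ≤ σ 0) (hm : σ m ≤ T) :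
    A (σ m) (σ 0) = twistedSum S A σ m := by
  have hstep : ∀ k ∈ Finset.range m, A (σ m) (σ k) - A (σ m) (σ (k + 1))
      = S (σ m - σ (k + 1)) (A (σ (k + 1)) (σ k)) := fun k hk => by
    have hk : k + 1 ≤ m := Finset.mem_range.1 hk
    have h0k : σ 0 ≤ σ k := hσ m.zero_le (k.le_succ.trans hk) k.zero_le
    exact sub_eq_of_eq_add' <| hA _ _ _ (h0.trans h0k) (hσ (k.le_succ.trans hk) hk k.le_succ)
      (hσ hk Set.self_mem_Iic hk) hm
  have hself : A (σ m) (σ m) = 0 :=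
    hA.apply_self hS0 ⟨h0.trans (hσ m.zero_le Set.self_mem_Iic m.zero_le), hm⟩
  rw [twistedSum, ← Finset.sum_congr rfl hstep,
    Finset.sum_range_sub' (fun k => A (σ m) (σ k)), hself, sub_zero]

theorem norm_sub_twistedSum_le (hA : IsTwistedAdditive S T A)
    (hS0 : S 0 = ContinuousLinearMap.id ℝ E) (hS : ∀ t ∈ Set.Icc 0 T, ‖S t‖ ≤ M) (hθ : 1 ≤ θ)
    (hM : 0 ≤ M) (hK : 0 ≤ K)
    (hAΞ : ∀ s t, 0 ≤ s → s ≤ t → t ≤ T → ‖A t s - Ξ t s‖ ≤ K * (t - s) ^ θ)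
    {σ : ℕ → ℝ} {m : ℕ} (hσ : MonotoneOn σ (Set.Iic m)) (h0 : 0 ≤ σ 0) (hm : σ m ≤ T) {δ : ℝ}
    (hδ : ∀ k < m, σ (k + 1) - σ k ≤ δ) :
    ‖A (σ m) (σ 0) - twistedSum S Ξ σ m‖ ≤ M * K * (δ ^ (θ - 1) * (σ m - σ 0)) := by
  have hσ_succ : ∀ k < m, σ k ≤ σ (k + 1) := fun k hk => hσ hk.le hk k.le_succ
  have hterm : ∀ k < m, ‖S (σ m - σ (k + 1)) (A (σ (k + 1)) (σ k) - Ξ (σ (k + 1)) (σ k))‖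
      ≤ M * K * (σ (k + 1) - σ k) ^ θ := fun k hk => by
    have h0k : 0 ≤ σ k := h0.trans (hσ m.zero_le hk.le k.zero_le)
    have hkm : σ (k + 1) ≤ σ m := hσ hk Set.self_mem_Iic hk
    have hSk : ‖S (σ m - σ (k + 1))‖ ≤ M :=
      hS _ ⟨sub_nonneg.2 hkm, by linarith [hσ_succ k hk]⟩
    rw [mul_assoc]
    exact (S _).le_of_opNorm_le_of_le hSk (hAΞ _ _ h0k (hσ_succ k hk) (hkm.trans hm))
  rw [hA.eq_twistedSum hS0 hσ h0 hm, twistedSum, twistedSum, ← Finset.sum_sub_distrib]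
  simp_rw [← map_sub]
  calc _ ≤ ∑ k ∈ Finset.range m, M * K * (σ (k + 1) - σ k) ^ θ :=
        norm_sum_le_of_le _ fun k hk => hterm k (Finset.mem_range.1 hk)
    _ ≤ M * K * (δ ^ (θ - 1) * (σ m - σ 0)) := by
        rw [← Finset.mul_sum]
        gcongr
        exact sum_rpow_sub_le hθ hσ_succ hδ

theorem exists_norm_sub_twistedSum_lt (hA : IsTwistedAdditive S T A)
    (hS0 : S 0 = ContinuousLinearMap.id ℝ E) (hS : ∀ t ∈ Set.Icc 0 T, ‖S t‖ ≤ M) (hθ : 1 < θ)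
    (hT : 0 < T) (hAΞ : ∀ s t, 0 ≤ s → s ≤ t → t ≤ T → ‖A t s - Ξ t s‖ ≤ K * (t - s) ^ θ)
    {ε : ℝ} (hε : 0 < ε) :
    ∃ δ > 0, ∀ (σ : ℕ → ℝ) (m : ℕ), MonotoneOn σ (Set.Iic m) → 0 ≤ σ 0 → σ m ≤ T →
      (∀ k < m, σ (k + 1) - σ k ≤ δ) → ‖A (σ m) (σ 0) - twistedSum S Ξ σ m‖ < ε := by
  have hM : 0 ≤ M := (norm_nonneg _).trans (hS 0 ⟨le_rfl, hT.le⟩)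
  have hK : 0 ≤ K := nonneg_of_norm_le_mul_rpow (sub_pos.2 hT) (hAΞ 0 T le_rfl hT.le le_rfl)
  have hlim : Tendsto (fun δ : ℝ => M * K * (δ ^ (θ - 1) * T)) (𝓝[>] 0) (𝓝 0) := by
    have hcont : Continuous fun δ : ℝ => M * K * (δ ^ (θ - 1) * T) := by
      have := Real.continuous_rpow_const (q := θ - 1) (by linarith)
      fun_prop
    have h := hcont.tendsto 0
    rw [Real.zero_rpow (by linarith), zero_mul, mul_zero] at h
    exact h.mono_left nhdsWithin_le_nhds
  obtain ⟨δ, hδε, hδ⟩ := ((hlim.eventually_lt_const hε).and self_mem_nhdsWithin).exists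
  have hδ : 0 < δ := hδ
  refine ⟨δ, hδ, fun σ m hσ h0 hm hmesh =>
    (hA.norm_sub_twistedSum_le hS0 hS hθ.le hM hK hAΞ hσ h0 hm hmesh).trans_lt
      (lt_of_le_of_lt ?_ hδε)⟩
  gcongr
  linarith

theorem tendstoUniformlyOn_twistedSum (hA : IsTwistedAdditive S T A)
    (hS0 : S 0 = ContinuousLinearMap.id ℝ E) (hS : ∀ t ∈ Set.Icc 0 T, ‖S t‖ ≤ M) (hθ : 1 < θ)
    (hT : 0 < T) (hAΞ : ∀ s t, 0 ≤ s → s ≤ t → t ≤ T → ‖A t s - Ξ t s‖ ≤ K * (t - s) ^ θ) :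
    TendstoUniformlyOn (fun n r => twistedSum S Ξ (uniformPartition r.2 r.1 n) n)
      (fun r => A r.1 r.2) atTop (timeSimplex T) := by
  refine Metric.tendstoUniformlyOn_iff.2 fun ε hε => ?_
  obtain ⟨δ, hδ, hsum⟩ := hA.exists_norm_sub_twistedSum_lt hS0 hS hθ hT hAΞ hε
  filter_upwards [(tendsto_const_div_atTop_nhds_zero_nat T).eventually_le_const hδ,
    eventually_ne_atTop 0] with n hn hn0
  rintro ⟨t, s⟩ ⟨hs, hst, ht⟩
  have hend : uniformPartition s t n n = t := uniformPartition_self hn0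
  have hlt := hsum (uniformPartition s t n) n ((monotone_uniformPartition hst n).monotoneOn _)
    (by rwa [uniformPartition_zero]) (by rwa [hend]) fun k _ => by
      rw [uniformPartition_succ_sub]
      refine le_trans ?_ hn
      gcongr
      linarith
  rwa [uniformPartition_zero, hend, ← dist_eq_norm] at hlt

theorem eq_of_norm_sub_le (hA : IsTwistedAdditive S T A) (hA' : IsTwistedAdditive S T A')
    (hS0 : S 0 = ContinuousLinearMap.id ℝ E) (hS : ∀ t ∈ Set.Icc 0 T, ‖S t‖ ≤ M) (hθ : 1 < θ)
    (hT : 0 < T) (hAΞ : ∀ s t, 0 ≤ s → s ≤ t → t ≤ T → ‖A t s - Ξ t s‖ ≤ K * (t - s) ^ θ)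
    {K' : ℝ} (hAΞ' : ∀ s t, 0 ≤ s → s ≤ t → t ≤ T → ‖A' t s - Ξ t s‖ ≤ K' * (t - s) ^ θ)
    {s t : ℝ} (hs : 0 ≤ s) (hst : s ≤ t) (ht : t ≤ T) : A t s = A' t s :=
  have hmem : (t, s) ∈ timeSimplex T := ⟨hs, hst, ht⟩
  tendsto_nhds_unique
    ((hA.tendstoUniformlyOn_twistedSum hS0 hS hθ hT hAΞ).tendsto_at hmem)
    ((hA'.tendstoUniformlyOn_twistedSum hS0 hS hθ hT hAΞ').tendsto_at hmem)

end IsTwistedAdditive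

theorem eq_of_norm_sub_le_rpow {f : ℝ → E} (hθ : 1 < θ)
    (hf : ∀ s t, 0 ≤ s → s ≤ t → t ≤ T → ‖f t - f s‖ ≤ K * (t - s) ^ θ) {s t : ℝ} (hs : 0 ≤ s)
    (hst : s ≤ t) (ht : t ≤ T) : f t = f s := by
  rcases hst.eq_or_lt with rfl | hst
  · rfl
  have hincr : IsTwistedAdditive (fun _ => ContinuousLinearMap.id ℝ E) T fun t s => f t - f s :=
    fun s u t _ _ _ _ => (sub_add_sub_cancel (f t) (f u) (f s)).symm
  have hzero : IsTwistedAdditive (fun _ => ContinuousLinearMap.id ℝ E) T fun _ _ => 0 :=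
    fun _ _ _ _ _ _ _ => by simp
  have hT : 0 < T := by linarith
  refine sub_eq_zero.1 <| hincr.eq_of_norm_sub_le hzero rfl (Ξ := fun _ _ => 0)
    (fun _ _ => ContinuousLinearMap.norm_id_le) hθ hT (by simpa only [sub_zero] using hf) (K' := 0)
    (fun _ _ _ _ _ => by simp) hs hst.le ht

/-- The operator families that can be integrated: `X` has size `CX (t - s) ^ γ`, satisfies
`δ̂X = 0` and is strongly continuous on the simplex `S_T²`. -/
structure IsTwistedDriver (S : ℝ → E →L[ℝ] E) (T γ CX : ℝ) (X : ℝ → ℝ → E →L[ℝ] E) : Prop where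
  norm_le : ∀ s t, 0 ≤ s → s ≤ t → t ≤ T → ‖X t s‖ ≤ CX * (t - s) ^ γ
  cocycle : ∀ s u t, 0 ≤ s → s ≤ u → u ≤ t → t ≤ T → X t s = X t u + (S (t - u)).comp (X u s)
  continuousOn_apply : ∀ φ, ContinuousOn (fun r : ℝ × ℝ => X r.1 r.2 φ) (timeSimplex T)

/-- The germ `S_{t - v} X_{vr} z_r` whose primitive on `[0, t]` is the twisted Young integral up to
time `t`, written without `S` by means of `X_{tr} = X_{tv} + S_{t - v} X_{vr}`. -/
def youngGerm (X : ℝ → ℝ → E →L[ℝ] E) (z : ℝ → E) (t r v : ℝ) : E :=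
  X t r (z r) - X t v (z r)

namespace IsTwistedDriver

variable {X : ℝ → ℝ → E →L[ℝ] E} {z : ℝ → E} {γ κ CX Mz Cz : ℝ}

theorem nonneg (hX : IsTwistedDriver S T γ CX X) (hT : 0 < T) : 0 ≤ CX :=
  nonneg_of_norm_le_mul_rpow (sub_pos.2 hT) (hX.norm_le 0 T le_rfl hT.le le_rfl)

theorem isTwistedAdditive_apply (hX : IsTwistedDriver S T γ CX X) (φ : E) :
    IsTwistedAdditive S T fun t s => X t s φ :=
  fun s u t hs hsu hut ht => congrArg (· φ) (hX.cocycle s u t hs hsu hut ht)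

theorem map_apply_apply (hX : IsTwistedDriver S T γ CX X) {s u t : ℝ} (hs : 0 ≤ s) (hsu : s ≤ u)
    (hut : u ≤ t) (ht : t ≤ T) (φ : E) : S (t - u) (X u s φ) = X t s φ - X t u φ :=
  eq_sub_of_add_eq' (hX.isTwistedAdditive_apply φ s u t hs hsu hut ht).symm

theorem map_youngGerm (hX : IsTwistedDriver S T γ CX X) (z : ℝ → E) {r v u t : ℝ} (hr : 0 ≤ r)
    (hrv : r ≤ v) (hvu : v ≤ u) (hut : u ≤ t) (ht : t ≤ T) :
    S (t - u) (youngGerm X z u r v) = youngGerm X z t r v := by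
  simp only [youngGerm, map_sub, hX.map_apply_apply hr (hrv.trans hvu) hut ht,
    hX.map_apply_apply (hr.trans hrv) hvu hut ht, sub_sub_sub_cancel_right]

theorem youngGerm_self (hX : IsTwistedDriver S T γ CX X) (hS0 : S 0 = ContinuousLinearMap.id ℝ E)
    {t : ℝ} (ht : t ∈ Set.Icc 0 T) (z : ℝ → E) (s : ℝ) : youngGerm X z t s t = X t s (z s) := by
  rw [youngGerm, (hX.isTwistedAdditive_apply (z s)).apply_self hS0 ht, sub_zero]

theorem almostAdditive_youngGerm (hX : IsTwistedDriver S T γ CX X)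
    (hS : ∀ t ∈ Set.Icc 0 T, ‖S t‖ ≤ M) (hγ : 0 ≤ γ) (hκ : 0 ≤ κ) (hT : 0 < T)
    (hz : ∀ s t, 0 ≤ s → s ≤ t → t ≤ T → ‖z t - z s‖ ≤ Cz * (t - s) ^ κ) {t : ℝ} (ht : t ≤ T) :
    AlmostAdditive (youngGerm X z t) (M * (CX * Cz)) (γ + κ) 0 t := by
  intro r u v hr hru huv hvt
  have hCX := hX.nonneg hT
  have hCz := nonneg_of_norm_le_mul_rpow (sub_pos.2 hT) (hz 0 T le_rfl hT.le le_rfl)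
  have hvu : 0 ≤ v - u := sub_nonneg.2 huv
  have : 0 ≤ u - r := sub_nonneg.2 hru
  have hSv : ‖S (t - v)‖ ≤ M := hS _ ⟨sub_nonneg.2 hvt, by linarith⟩
  have hM : 0 ≤ M := (norm_nonneg _).trans hSv
  have hXvu := hX.norm_le u v (hr.trans hru) huv (hvt.trans ht)
  have hzru : ‖z r - z u‖ ≤ Cz * (u - r) ^ κ :=
    norm_sub_rev (z u) (z r) ▸ hz r u hr hru (huv.trans (hvt.trans ht))
  calc ‖youngGerm X z t r v - youngGerm X z t r u - youngGerm X z t u v‖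
      = ‖S (t - v) (X v u (z r - z u))‖ := by
        rw [hX.map_apply_apply (hr.trans hru) huv hvt ht]
        simp only [youngGerm, map_sub]
        congr 1
        abel
    _ ≤ M * (CX * (v - u) ^ γ * (Cz * (u - r) ^ κ)) :=
        (S _).le_of_opNorm_le_of_le hSv ((X v u).le_of_opNorm_le_of_le hXvu hzru)
    _ ≤ M * (CX * (v - r) ^ γ * (Cz * (v - r) ^ κ)) := by
        have : 0 ≤ v - r := hvu.trans (by gcongr)
        gcongr
    _ = M * (CX * Cz) * (v - r) ^ (γ + κ) := by
        rw [Real.rpow_add_of_nonneg (by linarith) hγ hκ]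
        ring

theorem exists_isTwistedAdditive [CompleteSpace E] (hX : IsTwistedDriver S T γ CX X)
    (hS0 : S 0 = ContinuousLinearMap.id ℝ E) (hS : ∀ t ∈ Set.Icc 0 T, ‖S t‖ ≤ M) (hγ : 0 ≤ γ)
    (hκ : 0 ≤ κ) (hγκ : 1 < γ + κ) (hT : 0 < T)
    (hz : ∀ s t, 0 ≤ s → s ≤ t → t ≤ T → ‖z t - z s‖ ≤ Cz * (t - s) ^ κ) :
    ∃ A, IsTwistedAdditive S T A ∧ ∀ s t, 0 ≤ s → s ≤ t → t ≤ T →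
      ‖A t s - X t s (z s)‖ ≤ 2 * (M * (CX * Cz)) * sewingConst (γ + κ) * (t - s) ^ (γ + κ) := by
  set K := 2 * (M * (CX * Cz)) * sewingConst (γ + κ)
  have hC : 0 ≤ M * (CX * Cz) :=
    mul_nonneg ((norm_nonneg _).trans (hS 0 ⟨le_rfl, hT.le⟩)) <| mul_nonneg (hX.nonneg hT) <|
      nonneg_of_norm_le_mul_rpow (sub_pos.2 hT) (hz 0 T le_rfl hT.le le_rfl)
  choose! F hF using fun t (ht : t ≤ T) =>
    (hX.almostAdditive_youngGerm hS hγ hκ hT hz ht).exists_norm_sub_sub_le hC hγκ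
  refine ⟨fun t s => F t t - F t s, fun s u t hs hsu hut ht => ?_, fun s t hs hst ht => ?_⟩
  · have hu := hut.trans ht
    have hdiff : ∀ r v, 0 ≤ r → r ≤ v → v ≤ u →
        ‖(F t v - S (t - u) (F u v)) - (F t r - S (t - u) (F u r))‖
          ≤ (K + M * K) * (v - r) ^ (γ + κ) := fun r v hr hrv hvu => by
      have hSu := (S (t - u)).le_of_opNorm_le_of_le (hS _ ⟨sub_nonneg.2 hut, by linarith⟩)
        (hF u hu r v hr hrv hvu)
      rw [map_sub, map_sub, hX.map_youngGerm z hr hrv hvu hut ht] at hSu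
      calc _ = ‖(F t v - F t r - youngGerm X z t r v)
              - (S (t - u) (F u v) - S (t - u) (F u r) - youngGerm X z t r v)‖ := by
            congr 1
            abel
        _ ≤ K * (v - r) ^ (γ + κ) + M * (K * (v - r) ^ (γ + κ)) :=
            norm_sub_le_of_le (hF t ht r v hr hrv (hvu.trans hut)) hSu
        _ = (K + M * K) * (v - r) ^ (γ + κ) := by ring
    have hconst := eq_of_norm_sub_le_rpow (f := fun v => F t v - S (t - u) (F u v)) hγκ hdiff hs
      hsu le_rfl
    simp only [map_sub]
    rw [← sub_eq_zero] at hconst ⊢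
    rw [← hconst]
    abel
  · rw [← hX.youngGerm_self hS0 ⟨hs.trans hst, ht⟩]
    exact hF t ht s t hs hst le_rfl

theorem continuousOn_uncurry (hX : IsTwistedDriver S T γ CX X) (hγ : 0 ≤ γ) (hT : 0 < T) :
    ContinuousOn (fun q : E × ℝ × ℝ => X q.2.1 q.2.2 q.1) (Set.univ ×ˢ timeSimplex T) := by
  have hCX := hX.nonneg hT
  refine continuousOn_prod_of_continuousOn_lipschitzOnWith _ (CX * T ^ γ).toNNReal
    (fun φ _ => hX.continuousOn_apply φ) ?_
  rintro ⟨t, s⟩ ⟨hs, hst, ht⟩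
  have : 0 ≤ t - s := sub_nonneg.2 hst
  have hbound : ‖X t s‖ ≤ CX * T ^ γ := by
    refine (hX.norm_le s t hs hst ht).trans ?_
    gcongr
    linarith
  exact ((X t s).lipschitz.weaken (NNReal.le_toNNReal_of_coe_le hbound)).lipschitzOnWith

theorem continuousOn_youngGerm_uniformPartition (hX : IsTwistedDriver S T γ CX X) (hγ : 0 ≤ γ)
    (hT : 0 < T) (hz : ContinuousOn z (Set.Icc 0 T)) {n k : ℕ} (hk : k < n) :
    ContinuousOn (fun r : ℝ × ℝ => youngGerm X z r.1 (uniformPartition r.2 r.1 n k)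
      (uniformPartition r.2 r.1 n (k + 1))) (timeSimplex T) := by
  have hcont : ∀ j, Continuous fun r : ℝ × ℝ => uniformPartition r.2 r.1 n j := fun j => by
    unfold uniformPartition
    fun_prop
  have hmem : ∀ r ∈ timeSimplex T, ∀ j ≤ n, (r.1, uniformPartition r.2 r.1 n j) ∈ timeSimplex T :=
    fun r hr j hj =>
      have hj := uniformPartition_mem_Icc hr.2.1 (by lia) hj
      ⟨hr.1.trans hj.1, hj.2, hr.2.2⟩
  have hzk : ContinuousOn (fun r : ℝ × ℝ => z (uniformPartition r.2 r.1 n k)) (timeSimplex T) :=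
    hz.comp (hcont k).continuousOn fun r hr =>
      have hrk := hmem r hr k hk.le
      ⟨hrk.1, hrk.2.1.trans hrk.2.2⟩
  have hXj : ∀ j ≤ n, ContinuousOn (fun r : ℝ × ℝ => X r.1 (uniformPartition r.2 r.1 n j)
      (z (uniformPartition r.2 r.1 n k))) (timeSimplex T) := fun j hj =>
    (hX.continuousOn_uncurry hγ hT).comp
      (hzk.prodMk (continuousOn_fst.prodMk (hcont j).continuousOn))
      fun r hr => ⟨Set.mem_univ _, hmem r hr j hj⟩
  exact (hXj k hk.le).sub (hXj (k + 1) hk)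

theorem continuousOn_of_norm_sub_le (hX : IsTwistedDriver S T γ CX X)
    (hS0 : S 0 = ContinuousLinearMap.id ℝ E) (hS : ∀ t ∈ Set.Icc 0 T, ‖S t‖ ≤ M) (hγ : 0 ≤ γ)
    (hθ : 1 < θ) (hT : 0 < T) (hz : ContinuousOn z (Set.Icc 0 T)) (hA : IsTwistedAdditive S T A)
    (hAX : ∀ s t, 0 ≤ s → s ≤ t → t ≤ T → ‖A t s - X t s (z s)‖ ≤ K * (t - s) ^ θ) :
    ContinuousOn (fun r : ℝ × ℝ => A r.1 r.2) (timeSimplex T) := by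
  refine (hA.tendstoUniformlyOn_twistedSum hS0 hS hθ hT (Ξ := fun t s => X t s (z s))
    hAX).continuousOn ((eventually_ne_atTop 0).mono fun n hn => ?_).frequently
  refine (continuousOn_finsetSum (Finset.range n) fun k hk =>
    hX.continuousOn_youngGerm_uniformPartition hγ hT hz (Finset.mem_range.1 hk)).congr ?_
  rintro ⟨t, s⟩ ⟨hs, hst, ht⟩
  refine Finset.sum_congr rfl fun k hk => ?_
  have hk := Finset.mem_range.1 hk
  rw [uniformPartition_self hn]
  exact hX.map_apply_apply (hs.trans (uniformPartition_mem_Icc hst hn hk.le).1)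
    (monotone_uniformPartition hst n k.le_succ) (uniformPartition_mem_Icc hst hn hk).2 ht _

theorem norm_le_of_norm_sub_le (hX : IsTwistedDriver S T γ CX X) (hM : 0 ≤ M) (hγ : 0 ≤ γ)
    (hκ : 0 ≤ κ) (hγκ : 1 < γ + κ) (hT : 0 < T) (hMz : ∀ t, 0 ≤ t → t ≤ T → ‖z t‖ ≤ Mz)
    (hCz : 0 ≤ Cz) {s t : ℝ} (hs : 0 ≤ s) (hst : s ≤ t) (ht : t ≤ T) {x : E}
    (hx : ‖x - X t s (z s)‖
      ≤ 2 * (M * (CX * Cz)) * sewingConst (γ + κ) * (t - s) ^ (γ + κ)) :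
    ‖x‖ ≤ (1 + 2 * M * sewingConst (γ + κ) * T ^ κ) * CX * (Mz + Cz) * (t - s) ^ γ := by
  have hCX := hX.nonneg hT
  have hMz0 : 0 ≤ Mz := (norm_nonneg _).trans (hMz 0 le_rfl hT.le)
  have hlen : 0 ≤ t - s := sub_nonneg.2 hst
  have hq := sewingConst_pos hγκ
  set L := 2 * M * sewingConst (γ + κ)
  have hL0 : 0 ≤ L := by positivity
  calc ‖x‖ = ‖X t s (z s) + (x - X t s (z s))‖ := by rw [add_sub_cancel]
    _ ≤ CX * (t - s) ^ γ * Mz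
          + 2 * (M * (CX * Cz)) * sewingConst (γ + κ) * (t - s) ^ (γ + κ) :=
        norm_add_le_of_le ((X t s).le_of_opNorm_le_of_le (hX.norm_le s t hs hst ht)
          (hMz s hs (hst.trans ht))) hx
    _ = (1 * Mz + L * (t - s) ^ κ * Cz) * (CX * (t - s) ^ γ) := by
        rw [Real.rpow_add_of_nonneg hlen hγ hκ]
        ring
    _ ≤ ((1 + L * T ^ κ) * Mz + (1 + L * T ^ κ) * Cz) * (CX * (t - s) ^ γ) := by
        have hLT : 0 ≤ L * T ^ κ := by positivity
        have hts : L * (t - s) ^ κ ≤ 1 + L * T ^ κ := by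
          have : (t - s) ^ κ ≤ T ^ κ := by gcongr; linarith
          nlinarith
        gcongr
        linarith
    _ = (1 + L * T ^ κ) * CX * (Mz + Cz) * (t - s) ^ γ := by ring

end IsTwistedDriver

theorem twisted_young_integral_general [CompleteSpace E] {γ κ T M CX Mz Cz : ℝ} (hγ : 0 ≤ γ)
    (hκ : 0 < κ) (hγκ : 1 < γ + κ) (hT : 0 < T) {S : ℝ → E →L[ℝ] E}
    (hS0 : S 0 = ContinuousLinearMap.id ℝ E) (hS : ∀ t ∈ Set.Icc 0 T, ‖S t‖ ≤ M)
    {X : ℝ → ℝ → E →L[ℝ] E}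
    (hX : IsTwistedDriver S T γ CX X) {z : ℝ → E} (hMz : ∀ t, 0 ≤ t → t ≤ T → ‖z t‖ ≤ Mz)
    (hz : ∀ s t, 0 ≤ s → s ≤ t → t ≤ T → ‖z t - z s‖ ≤ Cz * (t - s) ^ κ) :
    ∃ A : ℝ → ℝ → E,
      ContinuousOn (fun r : ℝ × ℝ => A r.1 r.2) (timeSimplex T) ∧
      IsTwistedAdditive S T A ∧
      (∃ K, ∀ s t, 0 ≤ s → s ≤ t → t ≤ T → ‖A t s - X t s (z s)‖ ≤ K * (t - s) ^ (γ + κ)) ∧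
      (∀ A', IsTwistedAdditive S T A' →
        (∃ K', ∀ s t, 0 ≤ s → s ≤ t → t ≤ T →
          ‖A' t s - X t s (z s)‖ ≤ K' * (t - s) ^ (γ + κ)) →
        ∀ s t, 0 ≤ s → s ≤ t → t ≤ T → A' t s = A t s) ∧
      (∀ s t, 0 ≤ s → s ≤ t → t ≤ T →
        ‖A t s‖ ≤ (1 + 2 * M * sewingConst (γ + κ) * T ^ κ) * CX * (Mz + Cz) * (t - s) ^ γ) ∧
      (∀ s t, 0 ≤ s → s ≤ t → t ≤ T → ∀ ε, 0 < ε → ∃ δ, 0 < δ ∧ ∀ (m : ℕ) (σ : ℕ → ℝ),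
        σ 0 = s → σ m = t → (∀ k < m, σ k ≤ σ (k + 1)) → (∀ k < m, σ (k + 1) - σ k ≤ δ) →
          ‖A t s - ∑ k ∈ Finset.range m,
            S (t - σ (k + 1)) (X (σ (k + 1)) (σ k) (z (σ k)))‖ < ε) := by
  have hM : 0 ≤ M := (norm_nonneg _).trans (hS 0 ⟨le_rfl, hT.le⟩)
  have hCz : 0 ≤ Cz := nonneg_of_norm_le_mul_rpow (sub_pos.2 hT) (hz 0 T le_rfl hT.le le_rfl)
  have hz_cont := continuousOn_Icc_of_norm_sub_le_rpow hCz hκ hz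
  obtain ⟨A, hA, hAX⟩ := hX.exists_isTwistedAdditive hS0 hS hγ hκ.le hγκ hT hz
  refine ⟨A, hX.continuousOn_of_norm_sub_le hS0 hS hγ hγκ hT hz_cont hA hAX, hA, ⟨_, hAX⟩,
    fun A' hA' ⟨K', hAX'⟩ s t => hA'.eq_of_norm_sub_le hA hS0 hS hγκ hT hAX' hAX,
    fun s t hs hst ht => hX.norm_le_of_norm_sub_le hM hγ hκ.le hγκ hT hMz hCz hs hst ht
      (hAX s t hs hst ht), fun s t hs hst ht ε hε => ?_⟩
  obtain ⟨δ, hδ, hsum⟩ := hA.exists_norm_sub_twistedSum_lt hS0 hS hγκ hT hAX hε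
  refine ⟨δ, hδ, ?_⟩
  rintro m σ rfl rfl hσ hmesh
  exact hsum σ m (monotoneOn_Iic_of_le_succ hσ) hs ht hmesh

end Twisted

/-- Young integration with respect to the twisted increment.
Given `γ, κ ∈ (0,1)` with `γ + κ > 1` and `T > 0`, there is a constant `c`
(depending only on `γ, κ, T`) such that for any family `X : S_T² → B(L^p(ℝ^n))`
with `‖X_{ts}φ‖ ≤ C_X (t-s)^γ ‖φ‖`, `δ̂X = 0` and `(s,t) ↦ X_{ts}φ` continuous,
and any `κ`-Hölder path `z` in `L^p(ℝ^n)` (bounded by `Mz`, Hölder constant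
`Cz`), there is a unique continuous `A : S_T² → L^p(ℝ^n)` with
`δ̂A = 0` and `‖A_{ts} - X_{ts}(z_s)‖ = O((t-s)^{γ+κ})`; moreover
`‖A_{ts}‖ ≤ c C_X (Mz + Cz) (t-s)^γ`, and `A_{ts}` is the limit of the Riemann
sums `Σ_k S_{t-t_{k+1}}(X_{t_{k+1}t_k}(z_{t_k}))` as the mesh tends to `0`. -/
theorem twisted_young_integral
    (γ κ : ℝ) (hγ0 : 0 < γ) (hγ1 : γ < 1) (hκ0 : 0 < κ) (hκ1 : κ < 1)
    (hγκ : 1 < γ + κ) (T : ℝ) (hT : 0 < T) :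
    ∃ c : ℝ, 0 < c ∧
      ∀ (n : ℕ), 1 ≤ n → ∀ (p : ℝ), 1 ≤ p → ∀ [Fact (1 ≤ ENNReal.ofReal p)],
      ∀ (S : ℝ → LpR n p →L[ℝ] LpR n p),
        S 0 = ContinuousLinearMap.id ℝ (LpR n p) →
        (∀ t : ℝ, 0 < t → ∀ φ : LpR n p,
          ⇑(S t φ) =ᵐ[volume] convol (heatKernel n t) ⇑φ) →
      ∀ (X : ℝ → ℝ → (LpR n p →L[ℝ] LpR n p)) (CX : ℝ),
        (∀ s t : ℝ, 0 ≤ s → s ≤ t → t ≤ T → ∀ φ : LpR n p,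
          ‖X t s φ‖ ≤ CX * (t - s) ^ γ * ‖φ‖) →
        (∀ s u t : ℝ, 0 ≤ s → s ≤ u → u ≤ t → t ≤ T →
          X t s = X t u + (S (t - u)).comp (X u s)) →
        (∀ φ : LpR n p, ContinuousOn (fun r : ℝ × ℝ => X r.1 r.2 φ)
          {r : ℝ × ℝ | 0 ≤ r.2 ∧ r.2 ≤ r.1 ∧ r.1 ≤ T}) →
      ∀ (z : ℝ → LpR n p) (Mz Cz : ℝ),
        (∀ t : ℝ, 0 ≤ t → t ≤ T → ‖z t‖ ≤ Mz) →
        (∀ s t : ℝ, 0 ≤ s → s ≤ t → t ≤ T → ‖z t - z s‖ ≤ Cz * (t - s) ^ κ) →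
      ∃ A : ℝ → ℝ → LpR n p,
        ContinuousOn (fun r : ℝ × ℝ => A r.1 r.2)
          {r : ℝ × ℝ | 0 ≤ r.2 ∧ r.2 ≤ r.1 ∧ r.1 ≤ T} ∧
        (∀ s u t : ℝ, 0 ≤ s → s ≤ u → u ≤ t → t ≤ T →
          A t s = A t u + S (t - u) (A u s)) ∧
        (∃ K : ℝ, ∀ s t : ℝ, 0 ≤ s → s ≤ t → t ≤ T →
          ‖A t s - X t s (z s)‖ ≤ K * (t - s) ^ (γ + κ)) ∧
        (∀ A' : ℝ → ℝ → LpR n p,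
          ContinuousOn (fun r : ℝ × ℝ => A' r.1 r.2)
            {r : ℝ × ℝ | 0 ≤ r.2 ∧ r.2 ≤ r.1 ∧ r.1 ≤ T} →
          (∀ s u t : ℝ, 0 ≤ s → s ≤ u → u ≤ t → t ≤ T →
            A' t s = A' t u + S (t - u) (A' u s)) →
          (∃ K' : ℝ, ∀ s t : ℝ, 0 ≤ s → s ≤ t → t ≤ T →
            ‖A' t s - X t s (z s)‖ ≤ K' * (t - s) ^ (γ + κ)) →
          ∀ s t : ℝ, 0 ≤ s → s ≤ t → t ≤ T → A' t s = A t s) ∧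
        (∀ s t : ℝ, 0 ≤ s → s ≤ t → t ≤ T →
          ‖A t s‖ ≤ c * CX * (Mz + Cz) * (t - s) ^ γ) ∧
        (∀ s t : ℝ, 0 ≤ s → s ≤ t → t ≤ T →
          ∀ ε : ℝ, 0 < ε → ∃ δ : ℝ, 0 < δ ∧
            ∀ (m : ℕ) (σ : ℕ → ℝ), 0 < m → σ 0 = s → σ m = t →
              (∀ k < m, σ k ≤ σ (k + 1)) → (∀ k < m, σ (k + 1) - σ k ≤ δ) →
              ‖A t s - ∑ k ∈ Finset.range m,
                  S (t - σ (k + 1)) (X (σ (k + 1)) (σ k) (z (σ k)))‖ < ε) := by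
  refine ⟨1 + 2 * 1 * sewingConst (γ + κ) * T ^ κ, ?_, ?_⟩
  · have := sewingConst_pos hγκ
    positivity
  intro n _ p _ _ S hS0 hS X CX hX_le hX_cocycle hX_cont z Mz Cz hMz hz
  have : Nontrivial (LpR n p) :=
    nontrivial_Lp_of_measure_ne_zero (zero_lt_one.trans_le Fact.out).ne' measurableSet_ball
      (Metric.measure_ball_pos volume 0 one_pos).ne' measure_ball_lt_top.ne
  obtain ⟨A, hA_cont, hA, hAX, hA_unique, hA_le, hA_lim⟩ :=
    twisted_young_integral_general hγ0.le hκ0 hγκ hT hS0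
      (fun t ht => norm_heatSemigroup_le_one ENNReal.ofReal_ne_top hS0 hS ht.1)
      ⟨fun s t hs hst ht => opNorm_le_of_nontrivial (hX_le s t hs hst ht), hX_cocycle, hX_cont⟩
      hMz hz
  exact ⟨A, hA_cont, hA, hAX, fun A' _ => hA_unique A', hA_le, fun s t hs hst ht ε hε =>
    (hA_lim s t hs hst ht ε hε).imp fun _ ⟨hδ, h⟩ => ⟨hδ, fun m σ _ => h m σ⟩⟩
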